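/- arXiv:1804.10320 — 4 statements merged into one kernel-verified Lean document; each statement's English description precedes it below -/
import Mathlib

section
/- For every real ℓ ≥ 0, the orthogonal matrix Q_ℓ diagonalises Λ_ℓ: Q_ℓᵀ · Λ_ℓ · Q_ℓ = diag((ℓ−1)·ℓ, ℓ·(ℓ+1), (ℓ+1)·(ℓ+2)). -/
/-!
With `s = √2`, `a = √ℓ`, `b = √(ℓ + 1)` and `c = √(2ℓ + 1)`, the entries of `Λ_ℓ` and of the
unnormalised `Q_ℓ` become polynomials, and everything follows from the three relations `s² = 2`,
`b² = a² + 1` and `c² = a² + b²`: the columns of `Q_ℓ` are eigenvectors of `Λ_ℓ`, pairwise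
orthogonal and of common squared length `2c²` before normalisation. Hence `Λ Q = Q D` and
`Qᵀ Q = 1`, so `Qᵀ Λ Q = D`.
-/

open Matrix

/-- The orthogonal matrix `Q_ℓ` that diagonalises the vector Laplacian. -/
noncomputable def Qmat (ℓ : ℝ) : Matrix (Fin 3) (Fin 3) ℝ :=
  (1 / (Real.sqrt 2 * Real.sqrt (2 * ℓ + 1))) •
    !![Real.sqrt (ℓ + 1), Real.sqrt (2 * ℓ + 1), -Real.sqrt ℓ;
       Real.sqrt (2 * ℓ), 0, Real.sqrt (2 * (ℓ + 1));
       -Real.sqrt (ℓ + 1), Real.sqrt (2 * ℓ + 1), Real.sqrt ℓ]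

/-- The symmetric matrix `Λ_ℓ` coupling the spin components of the vector Laplacian. -/
noncomputable def Lam (ℓ : ℝ) : Matrix (Fin 3) (Fin 3) ℝ :=
  !![ℓ * (ℓ + 1), -Real.sqrt (2 * ℓ * (ℓ + 1)), 0;
     -Real.sqrt (2 * ℓ * (ℓ + 1)), ℓ * (ℓ + 1) + 2, Real.sqrt (2 * ℓ * (ℓ + 1));
     0, Real.sqrt (2 * ℓ * (ℓ + 1)), ℓ * (ℓ + 1)]

theorem mul_eq_mul_diagonal_iff {m n R : Type*} [Fintype m] [Fintype n] [DecidableEq n]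
    [NonUnitalNonAssocCommSemiring R] {A : Matrix m m R} {P : Matrix m n R} {d : n → R} :
    A * P = P * diagonal d ↔ ∀ j, A *ᵥ P.col j = d j • P.col j := by
  simp only [← Matrix.ext_iff, funext_iff, mul_diagonal, mul_comm (P _ _)]
  exact forall_comm

section Polynomial

variable {R : Type*} [CommRing R]

/-- The polynomial form of `Λ_ℓ`, obtained by substituting `s = √2`, `a = √ℓ`, `b = √(ℓ + 1)`. -/
def couplingMatrix (s a b : R) : Matrix (Fin 3) (Fin 3) R :=
  !![a ^ 2 * b ^ 2, -(s * a * b), 0;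
     -(s * a * b), a ^ 2 * b ^ 2 + 2, s * a * b;
     0, s * a * b, a ^ 2 * b ^ 2]

/-- The matrix whose columns are eigenvectors of `couplingMatrix s a b`, written as the transpose of
the matrix listing them as rows. The second one is scaled by `c` so that all three have the same
length when `c ^ 2 = a ^ 2 + b ^ 2`. -/
def eigenvectorMatrix (s a b c : R) : Matrix (Fin 3) (Fin 3) R :=
  !![b, s * a, -b;
     c, 0, c;
     -a, s * b, a]ᵀ

theorem couplingMatrix_mulVec (s a b x y z : R) :
    couplingMatrix s a b *ᵥ ![x, y, z] =
      ![a ^ 2 * b ^ 2 * x - s * a * b * y,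
        (a ^ 2 * b ^ 2 + 2) * y + s * a * b * (z - x),
        a ^ 2 * b ^ 2 * z + s * a * b * y] := by
  simp only [couplingMatrix, cons_mulVec, empty_mulVec, vec3_dotProduct']
  refine vec3_eq ?_ ?_ ?_ <;> ring

variable {s a b : R}

theorem couplingMatrix_mulVec_lower (hs : s ^ 2 = 2) (hb : b ^ 2 = a ^ 2 + 1) :
    couplingMatrix s a b *ᵥ ![b, s * a, -b] = ((a ^ 2 - 1) * a ^ 2) • ![b, s * a, -b] := by
  rw [couplingMatrix_mulVec, smul_vec3]
  refine vec3_eq ?_ ?_ ?_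
  · linear_combination a ^ 2 * b * (hb - hs)
  · linear_combination s * a * (a ^ 2 - 2) * hb
  · linear_combination a ^ 2 * b * (hs - hb)

theorem couplingMatrix_mulVec_middle (s a b c : R) :
    couplingMatrix s a b *ᵥ ![c, 0, c] = (a ^ 2 * b ^ 2) • ![c, 0, c] := by
  rw [couplingMatrix_mulVec, smul_vec3]
  refine vec3_eq ?_ ?_ ?_ <;> ring

theorem couplingMatrix_mulVec_upper (hs : s ^ 2 = 2) (hb : b ^ 2 = a ^ 2 + 1) :
    couplingMatrix s a b *ᵥ ![-a, s * b, a] = (b ^ 2 * (b ^ 2 + 1)) • ![-a, s * b, a] := by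
  rw [couplingMatrix_mulVec, smul_vec3]
  refine vec3_eq ?_ ?_ ?_
  · linear_combination a * b ^ 2 * (hb - hs)
  · linear_combination -s * b * (b ^ 2 + 2) * hb
  · linear_combination a * b ^ 2 * (hs - hb)

theorem couplingMatrix_mul_eigenvectorMatrix (hs : s ^ 2 = 2) (hb : b ^ 2 = a ^ 2 + 1) (c : R) :
    couplingMatrix s a b * eigenvectorMatrix s a b c =
      eigenvectorMatrix s a b c *
        diagonal ![(a ^ 2 - 1) * a ^ 2, a ^ 2 * b ^ 2, b ^ 2 * (b ^ 2 + 1)] := by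
  refine mul_eq_mul_diagonal_iff.mpr fun j => ?_
  fin_cases j
  · exact couplingMatrix_mulVec_lower hs hb
  · exact couplingMatrix_mulVec_middle s a b c
  · exact couplingMatrix_mulVec_upper hs hb

theorem eigenvectorMatrix_transpose_mul_self {c : R} (hs : s ^ 2 = 2)
    (hc : c ^ 2 = a ^ 2 + b ^ 2) :
    (eigenvectorMatrix s a b c)ᵀ * eigenvectorMatrix s a b c = (2 * c ^ 2) • 1 := by
  have dot_zero_zero : b ^ 2 + (s * a) ^ 2 + b ^ 2 = 2 * c ^ 2 := by
    linear_combination a ^ 2 * hs - 2 * hc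
  have dot_two_two : a ^ 2 + (s * b) ^ 2 + a ^ 2 = 2 * c ^ 2 := by
    linear_combination b ^ 2 * hs - 2 * hc
  have dot_zero_two : -(b * a) + s * a * (s * b) + -(b * a) = 0 := by
    linear_combination a * b * hs
  have dot_two_zero : -(a * b) + s * b * (s * a) + -(a * b) = 0 := by
    linear_combination a * b * hs
  ext i j
  fin_cases i <;> fin_cases j <;>
    simp [eigenvectorMatrix, mul_apply, Fin.sum_univ_three, dot_zero_zero, dot_two_two,
      dot_zero_two, dot_two_zero, ← sq, ← two_mul]

end Polynomial

theorem Lam_eq_couplingMatrix {ℓ : ℝ} (hℓ : 0 ≤ ℓ) : Lam ℓ = couplingMatrix √2 √ℓ √(ℓ + 1) := by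
  have sqrt_two_mul_mul : √(2 * ℓ * (ℓ + 1)) = √2 * √ℓ * √(ℓ + 1) := by
    rw [Real.sqrt_mul (by positivity), Real.sqrt_mul zero_le_two]
  have sq_sqrt_succ : √(ℓ + 1) ^ 2 = ℓ + 1 := Real.sq_sqrt (by positivity)
  rw [Lam, couplingMatrix, sqrt_two_mul_mul, Real.sq_sqrt hℓ, sq_sqrt_succ]

theorem Qmat_eq_smul_eigenvectorMatrix (ℓ : ℝ) :
    Qmat ℓ = (√2 * √(2 * ℓ + 1))⁻¹ • eigenvectorMatrix √2 √ℓ √(ℓ + 1) √(2 * ℓ + 1) := by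
  rw [Qmat, one_div, Real.sqrt_mul zero_le_two, Real.sqrt_mul zero_le_two]
  congr 1
  ext i j
  fin_cases i <;> fin_cases j <;> rfl

theorem Qmat_transpose_mul_self {ℓ : ℝ} (hℓ : 0 ≤ ℓ) : (Qmat ℓ)ᵀ * Qmat ℓ = 1 := by
  have sq_two : √2 ^ 2 = (2 : ℝ) := Real.sq_sqrt zero_le_two
  have sq_sum : √(2 * ℓ + 1) ^ 2 = √ℓ ^ 2 + √(ℓ + 1) ^ 2 := by
    rw [Real.sq_sqrt (by positivity), Real.sq_sqrt hℓ, Real.sq_sqrt (by positivity)]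
    ring
  have normalisation : ((√2 * √(2 * ℓ + 1))⁻¹) ^ 2 * (2 * √(2 * ℓ + 1) ^ 2) = 1 := by
    rw [inv_pow, mul_pow, sq_two]
    exact inv_mul_cancel₀ (by positivity)
  rw [Qmat_eq_smul_eigenvectorMatrix, transpose_smul, smul_mul_smul_comm,
    eigenvectorMatrix_transpose_mul_self sq_two sq_sum, smul_smul, ← sq, normalisation, one_smul]

theorem Lam_mul_Qmat {ℓ : ℝ} (hℓ : 0 ≤ ℓ) :
    Lam ℓ * Qmat ℓ = Qmat ℓ * diagonal ![(ℓ - 1) * ℓ, ℓ * (ℓ + 1), (ℓ + 1) * (ℓ + 2)] := by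
  have sq_sqrt_succ : √(ℓ + 1) ^ 2 = ℓ + 1 := Real.sq_sqrt (by positivity)
  have sq_succ : √(ℓ + 1) ^ 2 = √ℓ ^ 2 + 1 := by rw [sq_sqrt_succ, Real.sq_sqrt hℓ]
  rw [Lam_eq_couplingMatrix hℓ, Qmat_eq_smul_eigenvectorMatrix, Matrix.mul_smul, smul_mul,
    couplingMatrix_mul_eigenvectorMatrix (Real.sq_sqrt zero_le_two) sq_succ,
    sq_sqrt_succ, Real.sq_sqrt hℓ, add_assoc ℓ 1 1, one_add_one_eq_two]

/-- For every real `ℓ ≥ 0`, the orthogonal matrix `Q_ℓ` diagonalises `Λ_ℓ`: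
`Q_ℓᵀ · Λ_ℓ · Q_ℓ = diag((ℓ−1)·ℓ, ℓ·(ℓ+1), (ℓ+1)·(ℓ+2))`. -/
theorem Qmat_diagonalises_Lam (ℓ : ℝ) (hℓ : 0 ≤ ℓ) :
    (Qmat ℓ)ᵀ * Lam ℓ * Qmat ℓ =
      Matrix.diagonal ![(ℓ - 1) * ℓ, ℓ * (ℓ + 1), (ℓ + 1) * (ℓ + 2)] := by
  calc
    (Qmat ℓ)ᵀ * Lam ℓ * Qmat ℓ
        = (Qmat ℓ)ᵀ * Qmat ℓ * diagonal ![(ℓ - 1) * ℓ, ℓ * (ℓ + 1), (ℓ + 1) * (ℓ + 2)] := by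
      rw [Matrix.mul_assoc, Lam_mul_Qmat hℓ, Matrix.mul_assoc]
    _ = diagonal ![(ℓ - 1) * ℓ, ℓ * (ℓ + 1), (ℓ + 1) * (ℓ + 2)] := by
      rw [Qmat_transpose_mul_self hℓ, Matrix.one_mul]
end

section
/- For every real ℓ ≥ 0, the characteristic polynomial of Λ_ℓ factors as det(x·I − Λ_ℓ) = (x − (ℓ−1)·ℓ)·(x − ℓ·(ℓ+1))·(x − (ℓ+1)·(ℓ+2)); in particular the eigenvalues of Λ_ℓ are λ_{ℓ−1}, λ_ℓ, λ_{ℓ+1} where λ_j := j(j+1). -/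
open Matrix

theorem det_smul_one_sub_tridiagonal_fin_three {R : Type*} [CommRing R] (a b c p q r s x : R) :
    (x • (1 : Matrix (Fin 3) (Fin 3) R) - !![a, p, 0; q, b, r; 0, s, c]).det =
      (x - a) * (x - b) * (x - c) - (x - c) * (p * q) - (x - a) * (r * s) := by
  have smul_one_sub : x • (1 : Matrix (Fin 3) (Fin 3) R) - !![a, p, 0; q, b, r; 0, s, c] =
      !![x - a, -p, 0; -q, x - b, -r; 0, -s, x - c] := by
    ext i j
    fin_cases i <;> fin_cases j <;> simp
  rw [smul_one_sub, det_fin_three]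
  simp only [of_apply, cons_val', cons_val_zero, cons_val_one, cons_val]
  ring

theorem Lam_charpoly_factors_general (ℓ : ℝ) (hℓ : 0 ≤ ℓ * (ℓ + 1)) (x : ℝ) :
    (x • (1 : Matrix (Fin 3) (Fin 3) ℝ) - Lam ℓ).det =
      (x - (ℓ - 1) * ℓ) * (x - ℓ * (ℓ + 1)) * (x - (ℓ + 1) * (ℓ + 2)) := by
  let t := √(2 * ℓ * (ℓ + 1))
  have t_mul_self : t * t = 2 * ℓ * (ℓ + 1) := Real.mul_self_sqrt (by linarith)
  calc (x • (1 : Matrix (Fin 3) (Fin 3) ℝ) - Lam ℓ).det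
      = (x - ℓ * (ℓ + 1)) * (x - (ℓ * (ℓ + 1) + 2)) * (x - ℓ * (ℓ + 1)) -
          (x - ℓ * (ℓ + 1)) * (-t * -t) - (x - ℓ * (ℓ + 1)) * (t * t) :=
        det_smul_one_sub_tridiagonal_fin_three ..
    _ = (x - ℓ * (ℓ + 1)) *
          ((x - ℓ * (ℓ + 1)) * (x - (ℓ * (ℓ + 1) + 2)) - 4 * (ℓ * (ℓ + 1))) := by
        rw [neg_mul_neg, t_mul_self]
        ring
    _ = (x - (ℓ - 1) * ℓ) * (x - ℓ * (ℓ + 1)) * (x - (ℓ + 1) * (ℓ + 2)) := by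
        ring

/-- For every real `ℓ ≥ 0`, the characteristic polynomial of `Λ_ℓ` factors as
`det(x·I − Λ_ℓ) = (x − (ℓ−1)·ℓ)·(x − ℓ·(ℓ+1))·(x − (ℓ+1)·(ℓ+2))`; in particular the
eigenvalues of `Λ_ℓ` are `λ_{ℓ−1}, λ_ℓ, λ_{ℓ+1}` where `λ_j := j(j+1)`. -/
theorem Lam_charpoly_factors (ℓ : ℝ) (hℓ : 0 ≤ ℓ) (x : ℝ) :
    (x • (1 : Matrix (Fin 3) (Fin 3) ℝ) - Lam ℓ).det =
      (x - (ℓ - 1) * ℓ) * (x - ℓ * (ℓ + 1)) * (x - (ℓ + 1) * (ℓ + 2)) :=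
  Lam_charpoly_factors_general ℓ (by positivity) x
end

section
/- For every real α > −1, real ℓ ≥ 0, and natural number n, the coefficients satisfy A_n² + B_{n−1}² + C_n² + D_{n−1}² = 1 (with B_{−1} = D_{−1} = 0 when n = 0). This is the diagonal part of the operator identity C_{α,ℓ}ᵀ·C_{α,ℓ} + R_{α,ℓ}ᵀ·R_{α,ℓ} = I for the conversion and radius-multiplication matrices built from these coefficients. -/
/-- `A_n` coefficient of the conversion matrix `C_{α,ℓ}`. -/
noncomputable def Acoef (α ℓ : ℝ) (n : ℤ) : ℝ :=
  Real.sqrt ((((n : ℝ) + α + 1) * ((n : ℝ) + α + ℓ + 3 / 2)) /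
    ((2 * (n : ℝ) + α + ℓ + 3 / 2) * (2 * (n : ℝ) + α + ℓ + 5 / 2)))

/-- `B_n` coefficient of the conversion matrix `C_{α,ℓ}`; note `B_{−1} = 0`. -/
noncomputable def Bcoef (α ℓ : ℝ) (n : ℤ) : ℝ :=
  -Real.sqrt ((((n : ℝ) + 1) * ((n : ℝ) + ℓ + 3 / 2)) /
    ((2 * (n : ℝ) + α + ℓ + 5 / 2) * (2 * (n : ℝ) + α + ℓ + 7 / 2)))

/-- `C_n` coefficient of the radius-multiplication matrix `R_{α,ℓ}`. -/
noncomputable def Ccoef (α ℓ : ℝ) (n : ℤ) : ℝ :=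
  Real.sqrt ((((n : ℝ) + ℓ + 3 / 2) * ((n : ℝ) + α + ℓ + 3 / 2)) /
    ((2 * (n : ℝ) + α + ℓ + 3 / 2) * (2 * (n : ℝ) + α + ℓ + 5 / 2)))

/-- `D_n` coefficient of the radius-multiplication matrix `R_{α,ℓ}`; note `D_{−1} = 0`. -/
noncomputable def Dcoef (α ℓ : ℝ) (n : ℤ) : ℝ :=
  Real.sqrt ((((n : ℝ) + 1) * ((n : ℝ) + α + 1)) /
    ((2 * (n : ℝ) + α + ℓ + 5 / 2) * (2 * (n : ℝ) + α + ℓ + 7 / 2)))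

/-!
`C_{α,ℓ}ᵀ·C_{α,ℓ}` and `R_{α,ℓ}ᵀ·R_{α,ℓ}` represent multiplication by `1 - r²` and by `r²` in the
basis `Q_n^{α,ℓ}`, which is why they add up to the identity. The reflection `r² ↦ 1 - r²`
interchanges the Jacobi parameters `α` and `ℓ + 1/2`, and with them the two matrices up to sign. On
the diagonal, put `s = α + ℓ + 3/2`: the numerators of `A_n²` and `C_n²` share the factor `n + s`,
and the remaining factors `n + α + 1` and `n + ℓ + 3/2` add up to the factor `2n + s + 1` of the
common denominator, leaving `A_n² + C_n² = (n + s) / (2n + s)`. In the same way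
`B_{n-1}² + D_{n-1}² = n / (2n + s)`.
-/

theorem Ccoef_eq_Acoef (α ℓ : ℝ) (n : ℤ) : Ccoef α ℓ n = Acoef (ℓ + 1 / 2) (α - 1 / 2) n := by
  unfold Acoef Ccoef
  ring_nf

theorem Dcoef_eq_neg_Bcoef (α ℓ : ℝ) (n : ℤ) :
    Dcoef α ℓ n = -Bcoef (ℓ + 1 / 2) (α - 1 / 2) n := by
  unfold Bcoef Dcoef
  ring_nf

theorem add_div_two_mul_add_nonneg {s : ℝ} (hs : -1 ≤ s) (n : ℕ) :
    0 ≤ (n + s) / (2 * n + s) := by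
  cases n with
  | zero => rcases eq_or_ne s 0 with hs₀ | hs₀ <;> simp [hs₀]
  | succ k =>
    have : (0 : ℝ) ≤ k := k.cast_nonneg
    push_cast
    exact div_nonneg (by linarith) (by linarith)

section SquareSums

variable {α ℓ : ℝ}

theorem Acoef_sq (hα : -1 < α) (hℓ : -(3 / 2) < ℓ) (n : ℕ) :
    Acoef α ℓ n ^ 2 = (n + α + 1) / (2 * n + α + ℓ + 5 / 2) *
      ((n + α + ℓ + 3 / 2) / (2 * n + α + ℓ + 3 / 2)) := by
  have : (0 : ℝ) ≤ n := n.cast_nonneg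
  have hfst : 0 ≤ (n + α + 1) / (2 * n + α + ℓ + 5 / 2) :=
    div_nonneg (by linarith) (by linarith)
  have hsnd : 0 ≤ (n + α + ℓ + 3 / 2) / (2 * n + α + ℓ + 3 / 2) := by
    simpa only [add_assoc] using
      add_div_two_mul_add_nonneg (s := α + ℓ + 3 / 2) (by linarith) n
  rw [Acoef, Int.cast_natCast, mul_comm (2 * _ + _ + _ + _), mul_div_mul_comm,
    Real.sq_sqrt (mul_nonneg hfst hsnd)]

theorem Ccoef_sq (hα : -1 < α) (hℓ : -(3 / 2) < ℓ) (n : ℕ) :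
    Ccoef α ℓ n ^ 2 = (n + ℓ + 3 / 2) / (2 * n + α + ℓ + 5 / 2) *
      ((n + α + ℓ + 3 / 2) / (2 * n + α + ℓ + 3 / 2)) := by
  rw [Ccoef_eq_Acoef, Acoef_sq (by linarith) (by linarith)]
  ring_nf

theorem Bcoef_sq (hα : -1 < α) (hℓ : -(3 / 2) < ℓ) (n : ℕ) :
    Bcoef α ℓ n ^ 2 = ((n + 1) * (n + ℓ + 3 / 2)) /
      ((2 * n + α + ℓ + 5 / 2) * (2 * n + α + ℓ + 7 / 2)) := by
  have : (0 : ℝ) ≤ n := n.cast_nonneg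
  rw [Bcoef, Int.cast_natCast, neg_sq, Real.sq_sqrt]
  exact div_nonneg (mul_nonneg (by linarith) (by linarith))
    (mul_nonneg (by linarith) (by linarith))

theorem Dcoef_sq (hα : -1 < α) (hℓ : -(3 / 2) < ℓ) (n : ℕ) :
    Dcoef α ℓ n ^ 2 = ((n + 1) * (n + α + 1)) /
      ((2 * n + α + ℓ + 5 / 2) * (2 * n + α + ℓ + 7 / 2)) := by
  rw [Dcoef_eq_neg_Bcoef, neg_sq, Bcoef_sq (by linarith) (by linarith)]
  ring_nf

theorem Bcoef_neg_one (α ℓ : ℝ) : Bcoef α ℓ (-1) = 0 := by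
  simp [Bcoef]

theorem Dcoef_neg_one (α ℓ : ℝ) : Dcoef α ℓ (-1) = 0 := by
  rw [Dcoef_eq_neg_Bcoef, Bcoef_neg_one, neg_zero]

theorem Acoef_sq_add_Ccoef_sq (hα : -1 < α) (hℓ : -(3 / 2) < ℓ) (n : ℕ) :
    Acoef α ℓ n ^ 2 + Ccoef α ℓ n ^ 2 =
      (n + α + ℓ + 3 / 2) / (2 * n + α + ℓ + 3 / 2) := by
  have : (0 : ℝ) ≤ n := n.cast_nonneg
  have hden : 2 * n + α + ℓ + 5 / 2 ≠ 0 := by linarith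
  have hfactors : (n + α + 1) + (n + ℓ + 3 / 2) = 2 * n + α + ℓ + 5 / 2 := by ring
  rw [Acoef_sq hα hℓ, Ccoef_sq hα hℓ, ← add_mul, ← add_div, hfactors, div_self hden, one_mul]

theorem Bcoef_sq_add_Dcoef_sq (hα : -1 < α) (hℓ : -(3 / 2) < ℓ) (n : ℕ) :
    Bcoef α ℓ n ^ 2 + Dcoef α ℓ n ^ 2 = (n + 1) / (2 * n + α + ℓ + 7 / 2) := by
  have : (0 : ℝ) ≤ n := n.cast_nonneg
  have hden : 2 * n + α + ℓ + 5 / 2 ≠ 0 := by linarith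
  have hfactors : (n + ℓ + 3 / 2) + (n + α + 1) = 2 * n + α + ℓ + 5 / 2 := by ring
  rw [Bcoef_sq hα hℓ, Dcoef_sq hα hℓ, ← add_div, ← mul_add, hfactors, mul_comm,
    mul_div_mul_left _ _ hden]

theorem Bcoef_pred_sq_add_Dcoef_pred_sq (hα : -1 < α) (hℓ : -(3 / 2) < ℓ) (n : ℕ) :
    Bcoef α ℓ ((n : ℤ) - 1) ^ 2 + Dcoef α ℓ ((n : ℤ) - 1) ^ 2 =
      n / (2 * n + α + ℓ + 3 / 2) := by
  cases n with
  | zero => simp [Bcoef_neg_one, Dcoef_neg_one]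
  | succ k =>
    rw [Nat.cast_succ, add_sub_cancel_right, Bcoef_sq_add_Dcoef_sq hα hℓ, Nat.cast_succ]
    ring_nf

end SquareSums

/-- When the denominator in `hden` vanishes (`n = 0` and `α + ℓ = -3/2`), the convention `x / 0 = 0`
turns the left-hand side into `0`. -/
theorem conversion_radius_diag_identity_general {α ℓ : ℝ} (hα : -1 < α) (hℓ : -(3 / 2) < ℓ)
    (n : ℕ) (hden : 2 * n + α + ℓ + 3 / 2 ≠ 0) :
    Acoef α ℓ n ^ 2 + Bcoef α ℓ ((n : ℤ) - 1) ^ 2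
      + Ccoef α ℓ n ^ 2 + Dcoef α ℓ ((n : ℤ) - 1) ^ 2 = 1 := by
  calc
    _ = (Acoef α ℓ n ^ 2 + Ccoef α ℓ n ^ 2)
        + (Bcoef α ℓ ((n : ℤ) - 1) ^ 2 + Dcoef α ℓ ((n : ℤ) - 1) ^ 2) := by ring
    _ = (n + α + ℓ + 3 / 2) / (2 * n + α + ℓ + 3 / 2) + n / (2 * n + α + ℓ + 3 / 2) := by
      rw [Acoef_sq_add_Ccoef_sq hα hℓ, Bcoef_pred_sq_add_Dcoef_pred_sq hα hℓ]
    _ = 1 := by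
      rw [← add_div, div_eq_one_iff_eq hden]
      ring

/-- Diagonal part of the operator identity `C_{α,ℓ}ᵀ·C_{α,ℓ} + R_{α,ℓ}ᵀ·R_{α,ℓ} = I`:
for `α > −1`, `ℓ ≥ 0`, and every `n : ℕ`,
`A_n² + B_{n−1}² + C_n² + D_{n−1}² = 1` (with `B_{−1} = D_{−1} = 0` when `n = 0`). -/
theorem conversion_radius_diag_identity (α ℓ : ℝ) (hα : -1 < α) (hℓ : 0 ≤ ℓ) (n : ℕ) :
    Acoef α ℓ n ^ 2 + Bcoef α ℓ ((n : ℤ) - 1) ^ 2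
      + Ccoef α ℓ n ^ 2 + Dcoef α ℓ ((n : ℤ) - 1) ^ 2 = 1 := by
  have : (0 : ℝ) ≤ n := n.cast_nonneg
  exact conversion_radius_diag_identity_general hα (by linarith) n (by linarith)
end

section
/- Let ℓ ≥ 1, m, s be integers with |m| ≤ ℓ and |s| ≤ ℓ. Then α_ℓ² + β_ℓ² + β_{ℓ+1}² + ρ_{ℓ,s−1}² + κ_{ℓ,−s}² + κ_{ℓ+1,s−1}² = 1. This is the diagonal entry of the operator identity C_s·C_s + S⁺_{s−1}·S⁻_s = I for the matrices representing multiplication of spin-weighted spherical harmonics by cos θ and sin θ. -/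
/-- Coefficient `α_ℓ = −m·s/(ℓ(ℓ+1))` in the `cos θ` multiplication recurrence. -/
noncomputable def alphaCoef (ℓ m s : ℤ) : ℝ :=
  -((m : ℝ) * (s : ℝ)) / ((ℓ : ℝ) * ((ℓ : ℝ) + 1))

/-- Coefficient `β_ℓ = (1/ℓ)·√((ℓ−m)(ℓ+m)(ℓ−s)(ℓ+s)/((2ℓ−1)(2ℓ+1)))` in the `cos θ`
multiplication recurrence. -/
noncomputable def betaCoef (ℓ m s : ℤ) : ℝ :=
  (1 / (ℓ : ℝ)) * Real.sqrt ((((ℓ : ℝ) - m) * ((ℓ : ℝ) + m) * ((ℓ : ℝ) - s) * ((ℓ : ℝ) + s)) /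
    ((2 * (ℓ : ℝ) - 1) * (2 * (ℓ : ℝ) + 1)))

/-- Coefficient `ρ_{ℓ,s} = m·√((ℓ−s)(ℓ+s+1))/(ℓ(ℓ+1))` in the `sin θ` multiplication
recurrence. -/
noncomputable def rhoCoef (ℓ m s : ℤ) : ℝ :=
  (m : ℝ) * Real.sqrt (((ℓ : ℝ) - s) * ((ℓ : ℝ) + s + 1)) / ((ℓ : ℝ) * ((ℓ : ℝ) + 1))

/-- Coefficient `κ_{ℓ,s} = (1/ℓ)·√((ℓ−m)(ℓ+m)(ℓ−s−1)(ℓ−s)/((2ℓ−1)(2ℓ+1)))` in the `sin θ`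
multiplication recurrence. -/
noncomputable def kappaCoef (ℓ m s : ℤ) : ℝ :=
  (1 / (ℓ : ℝ)) * Real.sqrt ((((ℓ : ℝ) - m) * ((ℓ : ℝ) + m) * ((ℓ : ℝ) - s - 1) * ((ℓ : ℝ) - s)) /
    ((2 * (ℓ : ℝ) - 1) * (2 * (ℓ : ℝ) + 1)))

/-!
Group the six squares by the degree `ℓ`, `ℓ - 1` or `ℓ + 1` of the target harmonic. In each of
the last two groups the `β` and `κ` terms share all but one linear factor, and the two remaining
factors add up to `2ℓ - 1`, respectively `2ℓ + 3`, which cancels against the denominator. The part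
of the sum free of `m` is then `(ℓ + s) / (2ℓ + 1) + (ℓ + 1 - s) / (2ℓ + 1) = 1`, and the
coefficients of `m²` cancel.
-/

theorem sub_mul_add_nonneg_of_abs_le {R : Type*} [Ring R] [LinearOrder R] [IsOrderedRing R]
    {a b : R} (h : |b| ≤ a) : 0 ≤ (a - b) * (a + b) :=
  mul_nonneg (sub_nonneg.mpr (le_of_abs_le h)) (neg_le_iff_add_nonneg'.mp (neg_le_of_abs_le h))

theorem sub_one_mul_self_nonneg (n : ℤ) : 0 ≤ (n - 1) * n := by
  linarith [Int.le_self_sq n]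

theorem one_div_mul_sqrt_div_sq {x r d : ℝ} (hr : 0 ≤ r) (hd : 0 ≤ d) :
    (1 / x * √(r / d)) ^ 2 = r / (x ^ 2 * d) := by
  rw [mul_pow, Real.sq_sqrt (div_nonneg hr hd), div_pow, one_pow, div_mul_div_comm, one_mul]

section Coefficients

variable {ℓ m s : ℤ}

theorem betaCoef_sq (hℓ : 1 ≤ ℓ) (hm : |m| ≤ ℓ) (hs : |s| ≤ ℓ) :
    betaCoef ℓ m s ^ 2 =
      ((ℓ : ℝ) ^ 2 - m ^ 2) * ((ℓ - s) * (ℓ + s)) / (ℓ ^ 2 * ((2 * ℓ - 1) * (2 * ℓ + 1))) := by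
  have hden : 0 ≤ (2 * ℓ - 1) * (2 * ℓ + 1) := mul_nonneg (by lia) (by lia)
  have hnum : 0 ≤ (ℓ - m) * (ℓ + m) * (ℓ - s) * (ℓ + s) := by
    rw [mul_assoc]
    exact mul_nonneg (sub_mul_add_nonneg_of_abs_le hm) (sub_mul_add_nonneg_of_abs_le hs)
  rw [betaCoef, one_div_mul_sqrt_div_sq (mod_cast hnum) (mod_cast hden)]
  ring

theorem rhoCoef_sq (hs_lower : -ℓ ≤ s + 1) (hs_upper : s ≤ ℓ) :
    rhoCoef ℓ m s ^ 2 = (m : ℝ) ^ 2 * ((ℓ - s) * (ℓ + s + 1)) / (ℓ * (ℓ + 1)) ^ 2 := by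
  have hrad : 0 ≤ (ℓ - s) * (ℓ + s + 1) := mul_nonneg (by lia) (by lia)
  rw [rhoCoef, div_pow, mul_pow, Real.sq_sqrt (mod_cast hrad)]

theorem kappaCoef_sq (hℓ : 1 ≤ ℓ) (hm : |m| ≤ ℓ) :
    kappaCoef ℓ m s ^ 2 =
      ((ℓ : ℝ) ^ 2 - m ^ 2) * ((ℓ - s - 1) * (ℓ - s)) /
        (ℓ ^ 2 * ((2 * ℓ - 1) * (2 * ℓ + 1))) := by
  have hden : 0 ≤ (2 * ℓ - 1) * (2 * ℓ + 1) := mul_nonneg (by lia) (by lia)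
  have hnum : 0 ≤ (ℓ - m) * (ℓ + m) * (ℓ - s - 1) * (ℓ - s) := by
    rw [mul_assoc]
    exact mul_nonneg (sub_mul_add_nonneg_of_abs_le hm) (sub_one_mul_self_nonneg (ℓ - s))
  rw [kappaCoef, one_div_mul_sqrt_div_sq (mod_cast hnum) (mod_cast hden)]
  ring

theorem alphaCoef_sq_add_rhoCoef_sub_one_sq (hs_lower : -ℓ ≤ s) (hs_upper : s ≤ ℓ + 1) :
    alphaCoef ℓ m s ^ 2 + rhoCoef ℓ m (s - 1) ^ 2 =
      (m : ℝ) ^ 2 * (ℓ * (ℓ + 1) + s) / (ℓ * (ℓ + 1)) ^ 2 := by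
  rw [alphaCoef, rhoCoef_sq (by lia) (by lia), div_pow, ← add_div]
  push_cast
  ring

theorem betaCoef_sq_add_kappaCoef_neg_sq (hℓ : 1 ≤ ℓ) (hm : |m| ≤ ℓ) (hs : |s| ≤ ℓ) :
    betaCoef ℓ m s ^ 2 + kappaCoef ℓ m (-s) ^ 2 =
      ((ℓ : ℝ) ^ 2 - m ^ 2) * (ℓ + s) / (ℓ ^ 2 * (2 * ℓ + 1)) := by
  have hfactor : 2 * ℓ - 1 ≠ 0 := by lia
  calc
    _ = ((ℓ : ℝ) ^ 2 - m ^ 2) * (ℓ + s) * (2 * ℓ - 1) /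
        (ℓ ^ 2 * (2 * ℓ + 1) * (2 * ℓ - 1)) := by
      rw [betaCoef_sq hℓ hm hs, kappaCoef_sq hℓ hm]
      push_cast
      ring
    _ = _ := mul_div_mul_right _ _ (mod_cast hfactor)

theorem betaCoef_sq_add_kappaCoef_sub_one_sq (hℓ : 1 ≤ ℓ) (hm : |m| ≤ ℓ) (hs : |s| ≤ ℓ) :
    betaCoef ℓ m s ^ 2 + kappaCoef ℓ m (s - 1) ^ 2 =
      ((ℓ : ℝ) ^ 2 - m ^ 2) * (ℓ - s) / (ℓ ^ 2 * (2 * ℓ - 1)) := by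
  have hfactor : 2 * ℓ + 1 ≠ 0 := by lia
  calc
    _ = ((ℓ : ℝ) ^ 2 - m ^ 2) * (ℓ - s) * (2 * ℓ + 1) /
        (ℓ ^ 2 * (2 * ℓ - 1) * (2 * ℓ + 1)) := by
      rw [betaCoef_sq hℓ hm hs, kappaCoef_sq hℓ hm]
      push_cast
      ring
    _ = _ := mul_div_mul_right _ _ (mod_cast hfactor)

end Coefficients

/-- At `a = ℓ` and `b = ℓ + 1` the three terms are the sums of `α, ρ`, of `β_ℓ, κ_{ℓ,-s}` and of
`β_{ℓ+1}, κ_{ℓ+1,s-1}`, with `b - a = 1` and `a + b = 2ℓ + 1`. -/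
theorem pair_sums_eq_one {K : Type*} [Field K] {a b : K} (y z : K) (ha : a ≠ 0) (hb : b ≠ 0)
    (hab : a + b ≠ 0) :
    y ^ 2 * (a * b + (b - a) * z) / (a * b) ^ 2
      + (a ^ 2 - y ^ 2) * (a + z) / (a ^ 2 * (a + b))
      + (b ^ 2 - y ^ 2) * (b - z) / (b ^ 2 * (a + b)) = 1 := by
  have coeff_y_sq : (a * b + (b - a) * z) / (a * b) ^ 2 =
      (a + z) / (a ^ 2 * (a + b)) + (b - z) / (b ^ 2 * (a + b)) := by
    field_simp
    ring
  have constant_part : (a + z) / (a + b) + (b - z) / (a + b) = 1 := by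
    field_simp
    ring
  have split_left : (a ^ 2 - y ^ 2) * (a + z) / (a ^ 2 * (a + b)) =
      (a + z) / (a + b) - y ^ 2 * ((a + z) / (a ^ 2 * (a + b))) := by
    field_simp
  have split_right : (b ^ 2 - y ^ 2) * (b - z) / (b ^ 2 * (a + b)) =
      (b - z) / (a + b) - y ^ 2 * ((b - z) / (b ^ 2 * (a + b))) := by
    field_simp
  rw [mul_div_assoc, coeff_y_sq, split_left, split_right]
  linear_combination constant_part

/-- Diagonal entry of the operator identity `C_s·C_s + S⁺_{s−1}·S⁻_s = I` for the matrices
representing multiplication of spin-weighted spherical harmonics by `cos θ` and `sin θ`: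
for integers `ℓ ≥ 1`, `m`, `s` with `|m| ≤ ℓ` and `|s| ≤ ℓ`,
`α_ℓ² + β_ℓ² + β_{ℓ+1}² + ρ_{ℓ,s−1}² + κ_{ℓ,−s}² + κ_{ℓ+1,s−1}² = 1`. -/
theorem cos_sin_operator_identity (ℓ m s : ℤ) (hℓ : 1 ≤ ℓ) (hm : |m| ≤ ℓ) (hs : |s| ≤ ℓ) :
    alphaCoef ℓ m s ^ 2 + betaCoef ℓ m s ^ 2 + betaCoef (ℓ + 1) m s ^ 2
      + rhoCoef ℓ m (s - 1) ^ 2 + kappaCoef ℓ m (-s) ^ 2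
      + kappaCoef (ℓ + 1) m (s - 1) ^ 2 = 1 := by
  have hℓ_succ : 1 ≤ ℓ + 1 := by lia
  have hm_succ : |m| ≤ ℓ + 1 := by lia
  have hs_succ : |s| ≤ ℓ + 1 := by lia
  have hs_bounds : -ℓ ≤ s ∧ s ≤ ℓ := abs_le.mp hs
  have : (0 : ℝ) < ℓ := mod_cast hℓ
  have htwo : 2 * ((ℓ : ℝ) + 1) - 1 = 2 * ℓ + 1 := by ring
  calc
    _ = (alphaCoef ℓ m s ^ 2 + rhoCoef ℓ m (s - 1) ^ 2)
        + (betaCoef ℓ m s ^ 2 + kappaCoef ℓ m (-s) ^ 2)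
        + (betaCoef (ℓ + 1) m s ^ 2 + kappaCoef (ℓ + 1) m (s - 1) ^ 2) := by ring
    _ = (m : ℝ) ^ 2 * (ℓ * (ℓ + 1) + s) / (ℓ * (ℓ + 1)) ^ 2
        + ((ℓ : ℝ) ^ 2 - m ^ 2) * (ℓ + s) / (ℓ ^ 2 * (2 * ℓ + 1))
        + (((ℓ : ℝ) + 1) ^ 2 - m ^ 2) * (ℓ + 1 - s) / ((ℓ + 1) ^ 2 * (2 * ℓ + 1)) := by
      rw [alphaCoef_sq_add_rhoCoef_sub_one_sq hs_bounds.1 (by lia),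
        betaCoef_sq_add_kappaCoef_neg_sq hℓ hm hs,
        betaCoef_sq_add_kappaCoef_sub_one_sq hℓ_succ hm_succ hs_succ, Int.cast_add, Int.cast_one,
        htwo]
    _ = 1 := by
      linear_combination pair_sums_eq_one (a := (ℓ : ℝ)) (b := ℓ + 1) m s (by positivity)
        (by positivity) (by positivity)
end
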